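/- arXiv:1203.5485 — 2 statements merged into one kernel-verified Lean document; each statement's English description precedes it below -/
import Mathlib

section
/- (Lemma 1 of the paper.) Let c ≥ 2 and K ≥ 1 be integers, let K_opt ≥ 1 be an integer, and let i ≥ 0 satisfy ⌊K/c^(i+1)⌋ < K_opt ≤ ⌊K/c^i⌋; set K' = ⌊K/c^i⌋. Let A be a finite set (the φ-values selected by the query) and f : A → ℝ≥0 the frequencies of these values in the original table. Then ∑_{a ∈ A} min(f(a), K') ≤ (c + 1/K_opt) · ∑_{a ∈ A} min(f(a), K_opt). Consequently, for an I/O-bound query whose response time is proportional to the number of tuples it reads, the response time of the query running on the family sample with cap K' is at most c + 1/K_opt times its response time on the optimal-sized sample with cap K_opt. -/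
/-- Lemma 1 of the paper: the number of tuples read from the family sample with cap
`K' = ⌊K/c^i⌋` is at most `(c + 1/K_opt)` times the number of tuples read from the
optimal-sized sample with cap `K_opt`, hence the same bound holds for the response
time of an I/O-bound query. -/
theorem stmt_3 {α : Type*} (A : Finset α) (f : α → ℝ) (hf : ∀ a ∈ A, 0 ≤ f a)
    (c K Kopt i : ℕ) (hc : 2 ≤ c) (hK : 1 ≤ K) (hKopt : 1 ≤ Kopt)
    (h1 : K / c ^ (i + 1) < Kopt) (h2 : Kopt ≤ K / c ^ i) :
    ∑ a ∈ A, min (f a) ((K / c ^ i : ℕ) : ℝ) ≤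
      ((c : ℝ) + 1 / (Kopt : ℝ)) * ∑ a ∈ A, min (f a) ((Kopt : ℕ) : ℝ) := by
  have hk : K / c ^ i < Kopt * c := by
    rw [pow_succ, ← Nat.div_div_eq_div_mul] at h1
    exact (Nat.div_lt_iff_lt_mul (by omega)).1 h1
  have hkR : ((K / c ^ i : ℕ) : ℝ) ≤ (Kopt : ℝ) * c := by exact_mod_cast hk.le
  have hcR : (2 : ℝ) ≤ c := by exact_mod_cast hc
  have hp : (0 : ℝ) ≤ 1 / (Kopt : ℝ) := by positivity
  have hoR : (0 : ℝ) ≤ (Kopt : ℝ) := by positivity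
  generalize ((K / c ^ i : ℕ) : ℝ) = K' at *
  rw [Finset.mul_sum]
  refine Finset.sum_le_sum fun a ha => ?_
  have h0 := hf a ha
  rcases le_total (f a) (Kopt : ℝ) with h | h
  · rw [min_eq_left h]
    refine (min_le_left _ _).trans ?_
    nlinarith
  · rw [min_eq_right h]
    refine (min_le_right _ _).trans ?_
    nlinarith [mul_nonneg hp hoR]
end

section
/- (Lemma 2 of the paper.) Let c ≥ 2 and K ≥ 1 be integers, let i ≥ 1, and let K_opt be an integer with c < K_opt and ⌊K/c^i⌋ ≤ K_opt < ⌊K/c^(i−1)⌋. Then √(K_opt / ⌊K/c^i⌋) ≤ 1/√(1/c − 1/K_opt). Consequently, if the standard deviation of a query answer computed from n selected tuples is σ/√n for a constant σ > 0 and the number of selected tuples is proportional to the sample cap, then the standard deviation of the query running on the family sample with cap ⌊K/c^i⌋ is at most 1/√(1/c − 1/K_opt) times its standard deviation on the optimal-sized sample with cap K_opt. -/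
/-- Lemma 2 of the paper: when `⌊K/c^i⌋ ≤ K_opt < ⌊K/c^(i-1)⌋` and `c < K_opt`,
the standard-deviation blow-up factor `√(K_opt/⌊K/c^i⌋)` is at most
`1/√(1/c − 1/K_opt)`; consequently, if the standard deviation is `σ/√n` with the
number of selected tuples `n` proportional to the sample cap, the standard deviation
on the family sample with cap `⌊K/c^i⌋` is at most `1/√(1/c − 1/K_opt)` times the
standard deviation on the optimal-sized sample with cap `K_opt`. -/
theorem stmt_5 (c K Kopt i : ℕ) (hc : 2 ≤ c) (hK : 1 ≤ K) (hi : 1 ≤ i)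
    (hcK : c < Kopt) (h1 : K / c ^ i ≤ Kopt) (h2 : Kopt < K / c ^ (i - 1)) :
    Real.sqrt ((Kopt : ℝ) / ((K / c ^ i : ℕ) : ℝ)) ≤
        1 / Real.sqrt (1 / (c : ℝ) - 1 / (Kopt : ℝ)) ∧
      ∀ σ lam : ℝ, 0 < σ → 0 < lam →
        σ / Real.sqrt (lam * ((K / c ^ i : ℕ) : ℝ)) ≤
          (1 / Real.sqrt (1 / (c : ℝ) - 1 / (Kopt : ℝ))) *
            (σ / Real.sqrt (lam * (Kopt : ℝ))) := by
  obtain ⟨j, rfl⟩ : ∃ j, i = j + 1 := ⟨i - 1, by omega⟩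
  have hm : K / c ^ (j + 1) = (K / c ^ j) / c := by
    rw [pow_succ, Nat.div_div_eq_div_mul]
  simp only [Nat.add_sub_cancel] at h2
  have hb : Kopt < c * (K / c ^ (j + 1)) + c := by
    rw [hm]
    have e1 := Nat.div_add_mod (K / c ^ j) c
    have e2 := Nat.mod_lt (K / c ^ j) (show 0 < c by omega)
    omega
  have hmpos : 0 < K / c ^ (j + 1) := by
    rw [hm]
    exact Nat.div_pos (by omega) (by omega)
  generalize K / c ^ (j + 1) = m at *
  have hbR : (Kopt : ℝ) < c * m + c := by exact_mod_cast hb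
  have hmR : (0 : ℝ) < m := by exact_mod_cast hmpos
  have hcR : (0 : ℝ) < c := by exact_mod_cast (show 0 < c by omega)
  have hcKR : (c : ℝ) < Kopt := by exact_mod_cast hcK
  have hKR : (0 : ℝ) < Kopt := hcR.trans hcKR
  have hD : 0 < 1 / (c : ℝ) - 1 / (Kopt : ℝ) :=
    sub_pos.2 (one_div_lt_one_div_of_lt hcR hcKR)
  have hDm : (1 / (c : ℝ) - 1 / (Kopt : ℝ)) * Kopt ≤ m := by
    have e : (1 / (c : ℝ) - 1 / (Kopt : ℝ)) * Kopt = (Kopt - c) / c := by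
      field_simp
    rw [e, div_le_iff₀ hcR]
    linarith
  generalize 1 / (c : ℝ) - 1 / (Kopt : ℝ) = D at *
  constructor
  · rw [← Real.sqrt_one, ← Real.sqrt_div zero_le_one]
    apply Real.sqrt_le_sqrt
    rw [div_le_div_iff₀ hmR hD]
    linarith
  · intro σ lam hσ hl
    rw [div_mul_div_comm, one_mul, ← Real.sqrt_mul hD.le]
    apply div_le_div_of_nonneg_left hσ.le
    · exact Real.sqrt_pos.2 (by positivity)
    · apply Real.sqrt_le_sqrt
      nlinarith
end
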